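/- Reduction of conformant plan existence to model checking: given a pointed uncertainty map M,s, an EPDL formula φ, and a finite set B ⊆ A of action symbols, the following are equivalent: (1) there exists a finite (possibly empty) sequence σ = a1...an of actions from B such that M,s ⊨ K⦗a1⦘⦗a2⦘···⦗an⦘φ; (2) M,s ⊨ ⟨(Σ_{a∈B}(?K⟨a⟩⊤; a))*⟩Kφ. -/

import Mathlib

/-!
Since `K` quantifies over the uncertainty set, which is the first component of the state reached,
`K⦗a⦘ψ` holds at `U` iff every state of `U` has an `a`-successor and `Kψ` holds at `U|^a`
(`eSat_know_bbox_act`). On the other side, the guarded action `?K⟨a⟩⊤; a` moves `(U, s)` to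
`(U|^a, t)` with `s R_a t` exactly when every state of `U` has an `a`-successor
(`eRel_guardA`). So both a plan and a run of the iterated sum are unfolded one action at a time
under the same condition: a plan gives a run by induction on the plan, where the actual state
`s ∈ U` supplies the successor needed at each step, and a run gives a plan by induction on the run
from its first step.
-/

mutual
/-- Formulas of EPDL. -/
inductive EForm (P A : Type) : Type
  | top : EForm P A
  | atom : P → EForm P A
  | neg : EForm P A → EForm P A
  | and : EForm P A → EForm P A → EForm P A
  | box : EProg P A → EForm P A → EForm P A
  | know : EForm P A → EForm P A
/-- Programs of EPDL. -/
inductive EProg (P A : Type) : Type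
  | act : A → EProg P A
  | test : EForm P A → EProg P A
  | seq : EProg P A → EProg P A → EProg P A
  | choice : EProg P A → EProg P A → EProg P A
  | star : EProg P A → EProg P A
end

namespace EForm
variable {P A : Type}
/-- φ ∨ ψ := ¬(¬φ ∧ ¬ψ) -/
def or (φ ψ : EForm P A) : EForm P A := neg (and (neg φ) (neg ψ))
/-- φ → ψ := ¬φ ∨ ψ -/
def imp (φ ψ : EForm P A) : EForm P A := or (neg φ) ψ
def iff (φ ψ : EForm P A) : EForm P A := and (imp φ ψ) (imp ψ φ)
/-- ⟨π⟩φ := ¬[π]¬φ -/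
def dia (π : EProg P A) (φ : EForm P A) : EForm P A := neg (box π (neg φ))
/-- ⦗π⦘φ := [π]φ ∧ ⟨π⟩φ -/
def bbox (π : EProg P A) (φ : EForm P A) : EForm P A := and (box π φ) (dia π φ)
/-- K̂φ := ¬K¬φ -/
def hatK (φ : EForm P A) : EForm P A := neg (know (neg φ))
end EForm

/-- A Kripke model with labelled relations. -/
structure Kripke (P A : Type) where
  S : Type
  R : A → S → S → Prop
  V : S → P → Prop

namespace Kripke
variable {P A : Type}
/-- U|^a -/
def img (N : Kripke P A) (a : A) (U : Set N.S) : Set N.S := {t | ∃ u ∈ U, N.R a u t}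
/-- Iterated update U|^σ along a sequence of actions. -/
def updU (N : Kripke P A) : Set N.S → List A → Set N.S
  | U, [] => U
  | U, a :: σ => N.updU (N.img a U) σ
end Kripke

mutual
/-- Truth of an EPDL formula at a pointed uncertainty map, represented by the
(fixed) Kripke model `N`, an uncertainty set `U` and a state `s`. -/
def eSat {P A : Type} (N : Kripke P A) : Set N.S → N.S → EForm P A → Prop
  | _, _, .top => True
  | _, s, .atom p => N.V s p
  | U, s, .neg φ => ¬ eSat N U s φ
  | U, s, .and φ ψ => eSat N U s φ ∧ eSat N U s ψ
  | U, s, .box π φ => ∀ c : Set N.S × N.S, eRel N π (U, s) c → eSat N c.1 c.2 φ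
  | U, _, .know φ => ∀ u ∈ U, eSat N U u φ
/-- The relation ⟦π⟧ between pointed uncertainty maps (over a fixed Kripke model
`N`, a pointed uncertainty map is a pair of an uncertainty set and a state). -/
def eRel {P A : Type} (N : Kripke P A) : EProg P A → Set N.S × N.S → Set N.S × N.S → Prop
  | .act a, c, c' => c'.1 = N.img a c.1 ∧ N.R a c.2 c'.2
  | .test ψ, c, c' => c' = c ∧ eSat N c.1 c.2 ψ
  | .seq π₁ π₂, c, c' => ∃ d, eRel N π₁ c d ∧ eRel N π₂ d c'
  | .choice π₁ π₂, c, c' => eRel N π₁ c c' ∨ eRel N π₂ c c'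
  | .star π, c, c' => Relation.ReflTransGen (fun x y => eRel N π x y) c c'
end

/-- Validity: truth at every pointed uncertainty map. -/
def eValid {P A : Type} (φ : EForm P A) : Prop :=
  ∀ (N : Kripke P A) (U : Set N.S), U.Nonempty → ∀ s ∈ U, eSat N U s φ

/-- ⦗a1⦘⦗a2⦘···⦗an⦘φ -/
def bchain {P A : Type} : List A → EForm P A → EForm P A
  | [], φ => φ
  | a :: as, φ => EForm.bbox (EProg.act a) (bchain as φ)

/-- The guarded action ?K⟨a⟩⊤; a. -/
def guardA {P A : Type} (a : A) : EProg P A :=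
  EProg.seq (EProg.test (EForm.know (EForm.dia (EProg.act a) EForm.top))) (EProg.act a)

/-- The program ?K⟨a1⟩⊤; a1; ...; ?K⟨an⟩⊤; an for a nonempty sequence a1...an. -/
def guardSeq {P A : Type} : A → List A → EProg P A
  | a, [] => guardA a
  | a, b :: bs => EProg.seq (guardA a) (guardSeq b bs)

/-- The formula ⟨?K⟨a1⟩⊤; a1; ...; ?K⟨an⟩⊤; an⟩Kφ (which is Kφ when n = 0). -/
def guardedDia {P A : Type} : List A → EForm P A → EForm P A
  | [], φ => EForm.know φ
  | a :: as, φ => EForm.dia (guardSeq a as) (EForm.know φ)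

/-- Σ_{a∈B}(?K⟨a⟩⊤; a), the sum of the guarded actions over a finite set B
(given as a list); for empty B it is the program ?⊥ with empty interpretation. -/
def sumGuard {P A : Type} : List A → EProg P A
  | [] => EProg.test (EForm.neg EForm.top)
  | [a] => guardA a
  | a :: b :: bs => EProg.choice (guardA a) (sumGuard (b :: bs))

theorem eSat_dia {P A : Type} (N : Kripke P A) (U : Set N.S) (s : N.S) (π : EProg P A)
    (φ : EForm P A) :
    eSat N U s (EForm.dia π φ) ↔ ∃ c : Set N.S × N.S, eRel N π (U, s) c ∧ eSat N c.1 c.2 φ := by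
  simp [EForm.dia, eSat]

/-- `K⦗a⦘ψ` unfolds to executability of `a` on all of `U` together with `Kψ` on `U|^a`. The states
`s` and `t` are unrelated: the truth of a `K`-formula does not depend on the actual state, and `t`
need not even lie in `U|^a`. -/
theorem eSat_know_bbox_act {P A : Type} (N : Kripke P A) (U : Set N.S) (s t : N.S) (a : A)
    (ψ : EForm P A) :
    eSat N U s (EForm.know (EForm.bbox (EProg.act a) ψ)) ↔
      (∀ u ∈ U, ∃ v, N.R a u v) ∧ eSat N (N.img a U) t (EForm.know ψ) := by
  simp only [eSat, EForm.bbox, eSat_dia, eRel]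
  constructor
  · intro h
    refine ⟨fun u hu => ?_, ?_⟩
    · obtain ⟨c, hc, -⟩ := (h u hu).2
      exact ⟨c.2, hc.2⟩
    · rintro v ⟨u, hu, huv⟩
      exact (h u hu).1 (N.img a U, v) ⟨rfl, huv⟩
  · rintro ⟨hex, h⟩ u hu
    refine ⟨?_, ?_⟩
    · rintro ⟨W, v⟩ ⟨rfl, huv⟩
      exact h v ⟨u, hu, huv⟩
    · obtain ⟨v, huv⟩ := hex u hu
      exact ⟨(N.img a U, v), ⟨rfl, huv⟩, h v ⟨u, hu, huv⟩⟩

theorem eRel_guardA {P A : Type} (N : Kripke P A) (a : A) (c c' : Set N.S × N.S) :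
    eRel N (guardA a) c c' ↔
      (∀ u ∈ c.1, ∃ v, N.R a u v) ∧ c'.1 = N.img a c.1 ∧ N.R a c.2 c'.2 := by
  simp only [guardA, eRel, eSat, eSat_dia]
  constructor
  · rintro ⟨d, ⟨rfl, h⟩, h'⟩
    refine ⟨fun u hu => ?_, h'⟩
    obtain ⟨e, he, -⟩ := h u hu
    exact ⟨e.2, he.2⟩
  · rintro ⟨h, h'⟩
    refine ⟨c, ⟨rfl, fun u hu => ?_⟩, h'⟩
    obtain ⟨v, hv⟩ := h u hu
    exact ⟨(N.img a c.1, v), ⟨rfl, hv⟩, trivial⟩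

theorem eRel_sumGuard {P A : Type} (N : Kripke P A) (B : List A) (c c' : Set N.S × N.S) :
    eRel N (sumGuard B) c c' ↔ ∃ a ∈ B, eRel N (guardA a) c c' := by
  induction B with
  | nil => simp [sumGuard, eRel, eSat]
  | cons a B ih =>
    cases B with
    | nil => simp [sumGuard]
    | cons b B => simp only [sumGuard, eRel, ih, List.exists_mem_cons_iff]

theorem exists_run_of_plan {P A : Type} (N : Kripke P A) (φ : EForm P A) (B σ : List A)
    (hσ : ∀ a ∈ σ, a ∈ B) (U : Set N.S) (s : N.S) (hs : s ∈ U)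
    (h : eSat N U s (EForm.know (bchain σ φ))) :
    ∃ c : Set N.S × N.S, Relation.ReflTransGen (fun x y => eRel N (sumGuard B) x y) (U, s) c ∧
      eSat N c.1 c.2 (EForm.know φ) := by
  induction σ generalizing U s with
  | nil => exact ⟨(U, s), .refl, h⟩
  | cons a σ ih =>
    obtain ⟨hex, h'⟩ := (eSat_know_bbox_act N U s s a (bchain σ φ)).1 h
    obtain ⟨t, ht⟩ := hex s hs
    obtain ⟨c, hc, hφ⟩ := ih (fun b hb => hσ b (List.mem_cons_of_mem _ hb)) (N.img a U) t
      ⟨s, hs, ht⟩ ((eSat_know_bbox_act N U s t a (bchain σ φ)).1 h).2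
    refine ⟨c, .head ?_ hc, hφ⟩
    exact (eRel_sumGuard N B _ _).2 ⟨a, hσ a List.mem_cons_self,
      (eRel_guardA N a _ _).2 ⟨hex, rfl, ht⟩⟩

/-- The plan is read off the run. Since `sumGuard B` only records that some summand was taken, the
action is chosen separately at each step. -/
theorem exists_plan_of_run {P A : Type} (N : Kripke P A) (φ : EForm P A) (B : List A)
    (c d : Set N.S × N.S)
    (hcd : Relation.ReflTransGen (fun x y => eRel N (sumGuard B) x y) c d)
    (h : eSat N d.1 d.2 (EForm.know φ)) :
    ∃ σ : List A, (∀ a ∈ σ, a ∈ B) ∧ eSat N c.1 c.2 (EForm.know (bchain σ φ)) := by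
  induction hcd using Relation.ReflTransGen.head_induction_on with
  | refl => exact ⟨[], by simp, h⟩
  | head hstep _ ih =>
    obtain ⟨σ, hσ, hsat⟩ := ih
    obtain ⟨a, ha, hrel⟩ := (eRel_sumGuard N B _ _).1 hstep
    obtain ⟨hex, himg, -⟩ := (eRel_guardA N a _ _).1 hrel
    rw [himg] at hsat
    exact ⟨a :: σ, List.forall_mem_cons.2 ⟨ha, hσ⟩,
      (eSat_know_bbox_act N _ _ _ a (bchain σ φ)).2 ⟨hex, hsat⟩⟩

/-- Reduction of conformant plan existence to model checking: given
a pointed uncertainty map M,s, an EPDL formula φ and a finite set B ⊆ A of action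
symbols (given as a list), the following are equivalent:
(1) there is a finite (possibly empty) sequence σ = a1...an of actions from B
    such that M,s ⊨ K⦗a1⦘⦗a2⦘···⦗an⦘φ;
(2) M,s ⊨ ⟨(Σ_{a∈B}(?K⟨a⟩⊤; a))*⟩Kφ. -/
theorem conformant_planning_reduction {P A : Type} [Countable P] [Countable A]
    (N : Kripke P A) (U : Set N.S) (hU : U.Nonempty) (s : N.S) (hs : s ∈ U)
    (φ : EForm P A) (B : List A) :
    (∃ σ : List A, (∀ a ∈ σ, a ∈ B) ∧ eSat N U s (EForm.know (bchain σ φ))) ↔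
      eSat N U s (EForm.dia (EProg.star (sumGuard B)) (EForm.know φ)) := by
  rw [eSat_dia]
  simp only [eRel]
  constructor
  · rintro ⟨σ, hσ, h⟩
    exact exists_run_of_plan N φ B σ hσ U s hs h
  · rintro ⟨c, hc, h⟩
    exact exists_plan_of_run N φ B (U, s) c hc h
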